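/- arXiv:1708.05218 — 3 statements merged into one kernel-verified Lean document; each statement's English description precedes it below -/
import Mathlib

section
/- Let X be a real Banach space and U ⊂ X a nonempty bounded set. A sequence {V_n : n ∈ ℕ} of nonempty subsets of U is determining for U if and only if every slice of U contains one of the sets V_n. -/
open Bornology Set Pointwise

variable {X : Type*} [NormedAddCommGroup X] [NormedSpace ℝ X]

/-- The sliceSet of `A` given by the functional `f` and `ε > 0`. -/
noncomputable def sliceSet (A : Set X) (f : X →L[ℝ] ℝ) (ε : ℝ) : Set X :=
  {x ∈ A | sSup (f '' A) - ε < f x}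

/-- `S` is a sliceSet of `A`: a nonempty set of the form `sliceSet A f ε` with `f ≠ 0`, `ε > 0`. -/
def IsSlice (A S : Set X) : Prop :=
  S.Nonempty ∧ ∃ f : X →L[ℝ] ℝ, f ≠ 0 ∧ ∃ ε : ℝ, 0 < ε ∧ S = sliceSet A f ε

/-- A sequence of subsets of `A` is determining if every set `B` meeting all of them
has `A` inside the closed convex hull of `B`. -/
def Determining (A : Set X) (V : ℕ → Set X) : Prop :=
  ∀ B : Set X, (∀ n, (B ∩ V n).Nonempty) → A ⊆ closure (convexHull ℝ B)

/-- A bounded set is slicely countably determined if it has a determining sequence of slices. -/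
def IsSCD (A : Set X) : Prop :=
  ∃ V : ℕ → Set X, (∀ n, IsSlice A (V n)) ∧ Determining A V

/-- The Daugavet property: every rank-one operator `x ↦ f x • y` satisfies the
Daugavet equation `‖Id + T‖ = 1 + ‖T‖`. -/
def DaugavetProperty (X : Type*) [NormedAddCommGroup X] [NormedSpace ℝ X] : Prop :=
  ∀ (f : X →L[ℝ] ℝ) (y : X),
    ‖ContinuousLinearMap.id ℝ X + f.smulRight y‖ = 1 + ‖f.smulRight y‖

/-!
By Hahn–Banach, the closed convex hull of `B` is cut out by the closed half-spaces containing `B`.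
A closed half-space contains some `B` meeting every `V n` exactly when no `V n` lies in the
complementary open half-space. Hence `V` is determining for `A` if and only if every open half-space
meeting `A` contains some `V n`, and for bounded `A` the nonempty traces on `A` of open half-spaces
are precisely the slices of `A`.
-/

section LocallyConvex

variable {E : Type*} [AddCommGroup E] [Module ℝ E] [TopologicalSpace E]

theorem le_of_mem_closure_convexHull {B : Set E} {x : E} {f : E →L[ℝ] ℝ} {c : ℝ}
    (hB : ∀ b ∈ B, f b ≤ c) (hx : x ∈ closure (convexHull ℝ B)) : f x ≤ c :=
  closure_minimal (convexHull_min hB (convex_halfSpace_le f.toLinearMap.isLinear c))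
    (isClosed_le f.continuous continuous_const) hx

theorem mem_closure_convexHull_iff_forall_le [IsTopologicalAddGroup E] [ContinuousSMul ℝ E]
    [LocallyConvexSpace ℝ E] {B : Set E} {x : E} :
    x ∈ closure (convexHull ℝ B) ↔
      ∀ (f : E →L[ℝ] ℝ) (c : ℝ), (∀ b ∈ B, f b ≤ c) → f x ≤ c := by
  refine ⟨fun hx f c hB => le_of_mem_closure_convexHull hB hx, fun h => ?_⟩
  by_contra hx
  obtain ⟨f, c, hBc, hcx⟩ := geometric_hahn_banach_closed_point
    (convex_convexHull ℝ B).closure isClosed_closure hx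
  have hB : ∀ b ∈ B, f b ≤ c := fun b hb =>
    (hBc b (subset_closure (subset_convexHull ℝ B hb))).le
  exact hcx.not_ge (h f c hB)

end LocallyConvex

theorem determining_iff_forall_exists_subset_halfSpace {A : Set X} {V : ℕ → Set X} :
    Determining A V ↔
      ∀ f : X →L[ℝ] ℝ, f ≠ 0 → ∀ c : ℝ, (∃ a ∈ A, c < f a) → ∃ n, V n ⊆ {x | c < f x} := by
  constructor
  · rintro hV f - c ⟨a, ha, hca⟩
    by_contra! hn
    have hmeet : ∀ n, ({x | f x ≤ c} ∩ V n).Nonempty := fun n => by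
      obtain ⟨v, hv, hvc⟩ := not_subset.1 (hn n)
      exact ⟨v, not_lt.1 (show ¬c < f v from hvc), hv⟩
    exact hca.not_ge (le_of_mem_closure_convexHull (fun _ hb => hb) (hV _ hmeet ha))
  · intro hV B hB a ha
    refine mem_closure_convexHull_iff_forall_le.2 fun f c hBc => ?_
    by_contra! hca
    have hf : f ≠ 0 := by
      rintro rfl
      obtain ⟨b, hb, -⟩ := hB 0
      exact hca.not_ge (hBc b hb)
    obtain ⟨n, hn⟩ := hV f hf c ⟨a, ha, hca⟩
    obtain ⟨b, hb, hbV⟩ := hB n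
    exact (hn hbV).not_ge (hBc b hb)

theorem sliceSet_sSup_sub (A : Set X) (f : X →L[ℝ] ℝ) (c : ℝ) :
    sliceSet A f (sSup (f '' A) - c) = A ∩ {x | c < f x} := by
  simp only [sliceSet, sub_sub_cancel, inter_def, mem_ofPred_eq]

theorem forall_exists_subset_sliceSet_iff {ι : Sort*} {A : Set X} {V : ι → Set X}
    {f : X →L[ℝ] ℝ} (hA : A.Nonempty) (hfA : BddAbove (f '' A)) (hVA : ∀ i, V i ⊆ A) :
    (∀ ε : ℝ, 0 < ε → ∃ i, V i ⊆ sliceSet A f ε) ↔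
      ∀ c : ℝ, (∃ a ∈ A, c < f a) → ∃ i, V i ⊆ {x | c < f x} := by
  have lt_sSup_iff (c : ℝ) : c < sSup (f '' A) ↔ ∃ a ∈ A, c < f a := by
    rw [lt_csSup_iff hfA (hA.image f), exists_mem_image]
  -- Reparametrize slices by their threshold `c = sSup (f '' A) - ε`.
  rw [(Equiv.subLeft (sSup (f '' A))).surjective.forall]
  simp only [Equiv.subLeft_apply, sub_pos, sliceSet_sSup_sub, subset_inter_iff, hVA, true_and,
    lt_sSup_iff]

theorem determining_iff_every_slice_contains_general {U : Set X} (hU : U.Nonempty)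
    (hUb : IsBounded U) {V : ℕ → Set X} (hVU : ∀ n, V n ⊆ U) :
    Determining U V ↔
      ∀ (f : X →L[ℝ] ℝ), f ≠ 0 → ∀ ε : ℝ, 0 < ε → ∃ n, V n ⊆ sliceSet U f ε := by
  have hbdd (f : X →L[ℝ] ℝ) : BddAbove (f '' U) := (f.lipschitz.isBounded_image hUb).bddAbove
  simp only [determining_iff_forall_exists_subset_halfSpace,
    forall_exists_subset_sliceSet_iff hU (hbdd _) hVU]

theorem determining_iff_every_slice_contains
    {X : Type*} [NormedAddCommGroup X] [NormedSpace ℝ X] [CompleteSpace X]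
    (U : Set X) (hU : U.Nonempty) (hUb : IsBounded U)
    (V : ℕ → Set X) (hVne : ∀ n, (V n).Nonempty) (hVU : ∀ n, V n ⊆ U) :
    Determining U V ↔
      ∀ (f : X →L[ℝ] ℝ), f ≠ 0 → ∀ ε : ℝ, 0 < ε → ∃ n, V n ⊆ sliceSet U f ε :=
  determining_iff_every_slice_contains_general hU hUb hVU
end

section
/- Let X be a real Banach space and A ⊂ X a nonempty bounded set. Then the following are equivalent: (1) A is SCD; (2) the convex hull conv(A) is SCD; (3) the closed convex hull closure(conv(A)) is SCD. -/
open Bornology Set Pointwise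

variable {X : Type*} [NormedAddCommGroup X] [NormedSpace ℝ X]

/-! A sequence of subsets of a bounded set `A` is determining if and only if every slice of `A`
contains one of its members (Hahn–Banach). Let `A ⊆ C ⊆ closure (convexHull ℝ A)`. Functionals have
the same supremum on `A` and on `C`, so the slices of `A` are the traces of those of `C`, and
inclusions between slices of `C` pass to `A`. Conversely, an inclusion between slices of `A` given
by `f` and `g` passes to `C` once the first slice is shrunk and the second slightly widened: on `A`,
the amount by which `g` falls below its level on the first slice is at most a multiple of
`sup f - f x`, and this affine inequality persists on the closed convex hull. Hence the slices of
`C` given by the same functionals with widths `1 / (m + 1)` are determining. -/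

section LinearFunctional

variable {A C : Set X}

theorem bddAbove_image_of_isBounded (hA : IsBounded A) (f : X →L[ℝ] ℝ) : BddAbove (f '' A) :=
  (f.lipschitz.isBounded_image hA).bddAbove

theorem apply_le_of_mem_closure_convexHull {f : X →L[ℝ] ℝ} {r : ℝ} (hf : ∀ x ∈ A, f x ≤ r) {x : X}
    (hx : x ∈ closure (convexHull ℝ A)) : f x ≤ r :=
  closure_minimal (convexHull_min hf (convex_halfSpace_le f.toLinearMap.isLinear r))
    (isClosed_le f.continuous continuous_const) hx

theorem nonempty_of_subset_closure_convexHull (hC : C ⊆ closure (convexHull ℝ A))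
    (hne : C.Nonempty) : A.Nonempty :=
  convexHull_nonempty_iff.1 (closure_nonempty_iff.1 (hne.mono hC))

theorem sSup_image_eq_of_subset_closure_convexHull (hA : IsBounded A) (hAC : A ⊆ C)
    (hC : C ⊆ closure (convexHull ℝ A)) (f : X →L[ℝ] ℝ) : sSup (f '' C) = sSup (f '' A) := by
  rcases C.eq_empty_or_nonempty with rfl | hne
  · rw [subset_empty_iff.1 hAC]
  have hlub : IsLUB (f '' A) (sSup (f '' A)) :=
    isLUB_csSup ((nonempty_of_subset_closure_convexHull hC hne).image f)
      (bddAbove_image_of_isBounded hA f)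
  refine IsLUB.csSup_eq ⟨?_, fun b hb => hlub.2 fun y hy => hb (image_mono hAC hy)⟩ (hne.image f)
  rintro _ ⟨x, hx, rfl⟩
  exact apply_le_of_mem_closure_convexHull (fun y hy => hlub.1 (mem_image_of_mem f hy)) (hC hx)

end LinearFunctional

section Slice

variable {A C : Set X} {f g : X →L[ℝ] ℝ} {ε δ η : ℝ}

theorem sliceSet_nonempty (hA : A.Nonempty) (f : X →L[ℝ] ℝ) (hε : 0 < ε) :
    (sliceSet A f ε).Nonempty := by
  obtain ⟨_, ⟨x, hx, rfl⟩, hlt⟩ := exists_lt_of_lt_csSup (hA.image f) (sub_lt_self _ hε)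
  exact ⟨x, hx, hlt⟩

theorem isSlice_sliceSet (hA : A.Nonempty) (hf : f ≠ 0) (hε : 0 < ε) :
    IsSlice A (sliceSet A f ε) :=
  ⟨sliceSet_nonempty hA f hε, f, hf, ε, hε, rfl⟩

theorem IsSlice.subset {S : Set X} (hS : IsSlice A S) : S ⊆ A := by
  obtain ⟨-, f, -, ε, -, rfl⟩ := hS
  exact sep_subset _ _

theorem sliceSet_mono (A : Set X) (f : X →L[ℝ] ℝ) (h : ε ≤ δ) :
    sliceSet A f ε ⊆ sliceSet A f δ :=
  fun _ hx => ⟨hx.1, (sub_le_sub_left h _).trans_lt hx.2⟩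

theorem sliceSet_eq_inter_sliceSet (hA : IsBounded A) (hAC : A ⊆ C)
    (hC : C ⊆ closure (convexHull ℝ A)) (f : X →L[ℝ] ℝ) (ε : ℝ) :
    sliceSet A f ε = A ∩ sliceSet C f ε := by
  ext x
  simp only [sliceSet, sSup_image_eq_of_subset_closure_convexHull hA hAC hC f, mem_inter_iff,
    mem_ofPred_eq]
  exact ⟨fun h => ⟨h.1, hAC h.1, h.2⟩, fun h => ⟨h.1, h.2.2⟩⟩

theorem exists_sub_mul_le_of_le_on_sliceSet (hA : IsBounded A) (hε : 0 < ε) {r : ℝ}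
    (hr : ∀ x ∈ sliceSet A f ε, r ≤ g x) :
    ∃ K : ℝ, 0 ≤ K ∧
      ∀ x ∈ closure (convexHull ℝ A), r - K * (sSup (f '' A) - f x) ≤ g x := by
  obtain ⟨M, hM⟩ := (g.lipschitz.isBounded_image hA).bddBelow
  -- `K` makes the left side at most `M` off the slice, where `f` is `ε` below its supremum.
  set K := max (r - M) 0 / ε with hK
  have hK0 : 0 ≤ K := by positivity
  have hKε : r - M ≤ K * ε := by
    rw [hK, div_mul_cancel₀ _ hε.ne']
    exact le_max_left _ _
  have on_A : ∀ x ∈ A, (K • f - g) x ≤ K * sSup (f '' A) - r := by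
    intro x hx
    suffices r - K * (sSup (f '' A) - f x) ≤ g x by
      simp only [sub_apply, smul_apply, smul_eq_mul]
      linarith
    by_cases hslice : sSup (f '' A) - ε < f x
    · have hfx : f x ≤ sSup (f '' A) :=
        le_csSup (bddAbove_image_of_isBounded hA f) (mem_image_of_mem f hx)
      exact (sub_le_self r (mul_nonneg hK0 (sub_nonneg.2 hfx))).trans (hr x ⟨hx, hslice⟩)
    · calc r - K * (sSup (f '' A) - f x) ≤ r - K * ε := by gcongr; linarith
        _ ≤ M := by linarith
        _ ≤ g x := hM (mem_image_of_mem g hx)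
  refine ⟨K, hK0, fun x hx => ?_⟩
  have on_hull := apply_le_of_mem_closure_convexHull on_A hx
  simp only [sub_apply, smul_apply, smul_eq_mul] at on_hull
  linarith

theorem exists_sliceSet_subset_of_sliceSet_subset (hA : IsBounded A) (hAC : A ⊆ C)
    (hC : C ⊆ closure (convexHull ℝ A)) (hε : 0 < ε) (hηδ : η < δ)
    (h : sliceSet A f ε ⊆ sliceSet A g η) : ∃ θ > 0, sliceSet C f θ ⊆ sliceSet C g δ := by
  obtain ⟨K, hK0, hK⟩ := exists_sub_mul_le_of_le_on_sliceSet hA hε fun x hx => (h hx).2.le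
  obtain ⟨θ, hθ, hKθ⟩ := exists_pos_mul_lt (sub_pos.2 hηδ) K
  refine ⟨θ, hθ, fun x ⟨hxC, hfx⟩ => ⟨hxC, ?_⟩⟩
  rw [sSup_image_eq_of_subset_closure_convexHull hA hAC hC] at hfx ⊢
  calc sSup (g '' A) - δ < sSup (g '' A) - η - K * θ := by linarith
    _ ≤ sSup (g '' A) - η - K * (sSup (f '' A) - f x) := by gcongr; linarith
    _ ≤ g x := hK x (hC hxC)

end Slice

section Determining

variable {A : Set X} {V : ℕ → Set X}

theorem Determining.exists_subset_sliceSet (hV : Determining A V) (hVA : ∀ n, V n ⊆ A)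
    (f : X →L[ℝ] ℝ) {ε : ℝ} (hε : 0 < ε) : ∃ n, V n ⊆ sliceSet A f ε := by
  by_contra! hnot
  choose x hxV hx using fun n => not_subset.1 (hnot n)
  have hfx : ∀ n, f (x n) ≤ sSup (f '' A) - ε := fun n =>
    not_lt.1 fun hlt => hx n ⟨hVA n (hxV n), hlt⟩
  have hfA : ∀ a ∈ A, f a ≤ sSup (f '' A) - ε := fun a ha =>
    apply_le_of_mem_closure_convexHull (forall_mem_range.2 hfx)
      (hV (range x) (fun n => ⟨x n, mem_range_self n, hxV n⟩) ha)
  have hsup : sSup (f '' A) ≤ sSup (f '' A) - ε :=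
    csSup_le ⟨_, mem_image_of_mem f (hVA 0 (hxV 0))⟩ (forall_mem_image.2 hfA)
  linarith

theorem determining_of_forall_exists_subset_sliceSet (hA : IsBounded A)
    (hV : ∀ (f : X →L[ℝ] ℝ) (ε : ℝ), 0 < ε → ∃ n, V n ⊆ sliceSet A f ε) : Determining A V := by
  intro B hB a ha
  by_contra hna
  obtain ⟨f, r, hfB, hra⟩ := geometric_hahn_banach_closed_point
    (convex_convexHull ℝ B).closure isClosed_closure hna
  have hfa : f a ≤ sSup (f '' A) :=
    le_csSup (bddAbove_image_of_isBounded hA f) (mem_image_of_mem f ha)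
  obtain ⟨n, hn⟩ := hV f (sSup (f '' A) - r) (sub_pos.2 (hra.trans_le hfa))
  obtain ⟨b, hbB, hbV⟩ := hB n
  have hrb : sSup (f '' A) - (sSup (f '' A) - r) < f b := (hn hbV).2
  rw [sub_sub_cancel] at hrb
  exact (hfB b (subset_closure (subset_convexHull ℝ B hbB))).not_gt hrb

theorem isSCD_iff_exists_forall_exists_sliceSet_subset (hA : IsBounded A) :
    IsSCD A ↔ A.Nonempty ∧ ∃ (f : ℕ → X →L[ℝ] ℝ) (ε : ℕ → ℝ), (∀ n, f n ≠ 0) ∧ (∀ n, 0 < ε n) ∧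
      ∀ (g : X →L[ℝ] ℝ) (δ : ℝ), 0 < δ → ∃ n, sliceSet A (f n) (ε n) ⊆ sliceSet A g δ := by
  constructor
  · rintro ⟨V, hV, hdet⟩
    have hVA : ∀ n, V n ⊆ A := fun n => (hV n).subset
    choose hne f hf ε hε hVeq using hV
    refine ⟨(hne 0).mono (hVA 0), f, ε, hf, hε, fun g δ hδ => ?_⟩
    simpa only [hVeq] using hdet.exists_subset_sliceSet hVA g hδ
  · rintro ⟨hne, f, ε, hf, hε, hsub⟩
    exact ⟨fun n => sliceSet A (f n) (ε n), fun n => isSlice_sliceSet hne (hf n) (hε n),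
      determining_of_forall_exists_subset_sliceSet hA hsub⟩

end Determining

section ClosedConvexHull

variable {A C : Set X}

theorem IsSCD.mono_of_subset_closure_convexHull (hSCD : IsSCD A) (hAb : IsBounded A) (hAC : A ⊆ C)
    (hC : C ⊆ closure (convexHull ℝ A)) : IsSCD C := by
  have hCb : IsBounded C := (isBounded_convexHull.2 hAb).closure.subset hC
  rw [isSCD_iff_exists_forall_exists_sliceSet_subset hAb] at hSCD
  rw [isSCD_iff_exists_forall_exists_sliceSet_subset hCb]
  obtain ⟨hne, f, ε, hf, hε, hsub⟩ := hSCD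
  refine ⟨hne.mono hAC, fun k => f k.unpair.1, fun k => 1 / ((k.unpair.2 : ℝ) + 1),
    fun k => hf _, fun k => Nat.one_div_pos_of_nat, fun g δ hδ => ?_⟩
  obtain ⟨n, hn⟩ := hsub g (δ / 2) (half_pos hδ)
  obtain ⟨θ, hθ, hsubC⟩ :=
    exists_sliceSet_subset_of_sliceSet_subset hAb hAC hC (hε n) (half_lt_self hδ) hn
  obtain ⟨m, hm⟩ := exists_nat_one_div_lt hθ
  refine ⟨Nat.pair n m, ?_⟩
  simpa only [Nat.unpair_pair] using (sliceSet_mono C (f n) hm.le).trans hsubC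

theorem IsSCD.anti_of_subset_closure_convexHull (hSCD : IsSCD C) (hAb : IsBounded A) (hAC : A ⊆ C)
    (hC : C ⊆ closure (convexHull ℝ A)) : IsSCD A := by
  have hCb : IsBounded C := (isBounded_convexHull.2 hAb).closure.subset hC
  rw [isSCD_iff_exists_forall_exists_sliceSet_subset hCb] at hSCD
  rw [isSCD_iff_exists_forall_exists_sliceSet_subset hAb]
  obtain ⟨hne, f, ε, hf, hε, hsub⟩ := hSCD
  refine ⟨nonempty_of_subset_closure_convexHull hC hne, f, ε, hf, hε, fun g δ hδ => ?_⟩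
  obtain ⟨n, hn⟩ := hsub g δ hδ
  refine ⟨n, ?_⟩
  simpa only [sliceSet_eq_inter_sliceSet hAb hAC hC] using inter_subset_inter_right A hn

theorem isSCD_iff_convexHull_iff_closedConvexHull_general (hAb : IsBounded A) (hAC : A ⊆ C)
    (hC : C ⊆ closure (convexHull ℝ A)) : IsSCD A ↔ IsSCD C :=
  ⟨fun h => h.mono_of_subset_closure_convexHull hAb hAC hC,
    fun h => h.anti_of_subset_closure_convexHull hAb hAC hC⟩

end ClosedConvexHull

theorem isSCD_iff_convexHull_iff_closedConvexHull
    {X : Type*} [NormedAddCommGroup X] [NormedSpace ℝ X] [CompleteSpace X]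
    (A : Set X) (hA : A.Nonempty) (hAb : IsBounded A) :
    (IsSCD A ↔ IsSCD (convexHull ℝ A)) ∧
    (IsSCD A ↔ IsSCD (closure (convexHull ℝ A))) := by
  exact ⟨isSCD_iff_convexHull_iff_closedConvexHull_general hAb (subset_convexHull ℝ A)
      subset_closure,
    isSCD_iff_convexHull_iff_closedConvexHull_general hAb
      ((subset_convexHull ℝ A).trans subset_closure) subset_rfl⟩
end

section
/- Let X be a real Banach space with the Daugavet property. Then there exist convex, closed, bounded SCD sets A, D ⊂ X such that the intersection A ∩ D is nonempty and is not SCD. -/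
open Bornology Set Pointwise

variable {X : Type*} [NormedAddCommGroup X] [NormedSpace ℝ X]

/-!
Take vectors `e₁, e₂` and functionals `h₁, h₂` that are biorthogonal. A non-SCD set `K` is produced
inside the common kernel of `h₁, h₂`, and is then recovered as the intersection of two SCD sets.

*The set `K`.* Let `P x = h₁ x • e₁ + h₂ x • e₂`, let `Y` be a separable subspace containing the
range of `P` and inheriting the Daugavet property, and let `K` be the closure of the image of the
unit ball of `Y` under `id - P`. Given countably many slices of `K`, the Daugavet property yields
`xₙ` in the unit ball of `Y`, with `(id - P) xₙ` in the `n`-th slice, which together are almost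
`ℓ₁`-orthogonal to the compact image of the unit ball under `P`. Hence `‖z - P z‖ ≥ 1 / 2` for every
convex combination `z` of the `xₙ`, so `0 ∈ K` is not in the closed convex hull of the `(id - P)
xₙ`.

*The sets `A` and `D`.* Let `qₙ` be a sequence in `K` accumulating at every point of `K`. The sets
`A` and `D` are the closed convex hulls of the points `qₙ ± tₙ e₁ + tₙ² e₂` with `tₙ = 2⁻ⁿ`. Each of
these points is strongly exposed by the tangent to the parabola at it, which makes `A` and `D` SCD,
and `K ⊆ A ∩ D` since `tₙ → 0`. Conversely `h₂ ≤ h₁` on `A`, `h₂ ≤ -h₁` on `D` and `0 ≤ h₂` on both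
force `h₁ = h₂ = 0` on `A ∩ D`, and such points of `A` lie in `K`.
-/

open Filter Metric Topology TopologicalSpace

lemma exists_seq_forall_mapClusterPt {M : Type*} [PseudoMetricSpace M] {K : Set M}
    (hK : IsSeparable K) (hne : K.Nonempty) :
    ∃ q : ℕ → M, (∀ n, q n ∈ K) ∧ ∀ x ∈ K, MapClusterPt x atTop q := by
  obtain ⟨D, hDK, hDc, hKD⟩ := hK.exists_countable_dense_subset
  obtain ⟨d, rfl⟩ := hDc.exists_eq_range (closure_nonempty_iff.mp (hne.mono hKD))
  -- Every value of `d` is taken infinitely often by `fun n => d n.unpair.1`.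
  refine ⟨fun n => d n.unpair.1, fun n => hDK (mem_range_self _), fun x hx => ?_⟩
  refine mapClusterPt_iff_frequently.mpr fun s hs => frequently_atTop.mpr fun N => ?_
  obtain ⟨_, hi, i, rfl⟩ := mem_closure_iff_nhds.mp (hKD hx) s hs
  exact ⟨Nat.pair i N, Nat.right_le_pair i N, by simpa using hi⟩

section ClosedConvexHull

lemma le_of_mem_closedConvexHull {s : Set X} {f : X →L[ℝ] ℝ} {a : ℝ} (hs : ∀ x ∈ s, f x ≤ a)
    {x : X} (hx : x ∈ closedConvexHull ℝ s) : f x ≤ a :=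
  closedConvexHull_min (𝕜 := ℝ) (t := {x | f x ≤ a}) hs
    (convex_halfSpace_le f.toLinearMap.isLinear a) (isClosed_le (by fun_prop) (by fun_prop)) hx

lemma exists_lt_of_mem_closedConvexHull {s : Set X} {f : X →L[ℝ] ℝ} {a : ℝ} {c : X}
    (hc : c ∈ closedConvexHull ℝ s) (hac : a < f c) : ∃ x ∈ s, a < f x := by
  by_contra! hle
  exact (le_of_mem_closedConvexHull hle hc).not_gt hac

lemma exists_countable_subset_mem_closedConvexHull {s : Set X} {c : X}
    (hc : c ∈ closedConvexHull ℝ s) :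
    ∃ t ⊆ s, t.Countable ∧ c ∈ closedConvexHull ℝ t := by
  rw [closedConvexHull_eq_closure_convexHull, mem_closure_iff_seq_limit] at hc
  obtain ⟨z, hz, hzc⟩ := hc
  have hfinite (n : ℕ) : ∃ t : Finset X, (t : Set X) ⊆ s ∧ z n ∈ convexHull ℝ (t : Set X) := by
    simpa only [convexHull_eq_union_convexHull_finite_subsets s, mem_iUnion, exists_prop]
      using hz n
  choose t hts hzt using hfinite
  refine ⟨⋃ n, t n, iUnion_subset hts, countable_iUnion fun n => (t n).countable_toSet, ?_⟩
  refine isClosed_closedConvexHull.mem_of_tendsto hzc (Eventually.of_forall fun n => ?_)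
  exact convexHull_subset_closedConvexHull
    (convexHull_mono (subset_iUnion (fun n => (t n : Set X)) n) (hzt n))

lemma exists_countable_subset_subset_closedConvexHull {s S : Set X} (hS : IsSeparable S)
    (hSs : S ⊆ closedConvexHull ℝ s) :
    ∃ t ⊆ s, t.Countable ∧ S ⊆ closedConvexHull ℝ t := by
  obtain ⟨D, hDS, hDc, hSD⟩ := hS.exists_countable_dense_subset
  choose! t hts htc hct using fun c (hc : c ∈ D) =>
    exists_countable_subset_mem_closedConvexHull (hSs (hDS hc))
  refine ⟨⋃ c ∈ D, t c, iUnion₂_subset hts, hDc.biUnion htc, hSD.trans ?_⟩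
  refine closure_minimal (fun c hc => ?_) isClosed_closedConvexHull
  exact (closedConvexHull ℝ).monotone (subset_biUnion_of_mem hc) (hct c hc)

lemma exists_weights_of_mem_convexHull_range {x : ℕ → X} {z : X}
    (hz : z ∈ convexHull ℝ (range x)) :
    ∃ (n : ℕ) (w : ℕ → ℝ), (∀ k, w k ∈ Icc 0 1) ∧ ∑ k ∈ Finset.range n, w k = 1 ∧
      ∑ k ∈ Finset.range n, w k • x k = z := by
  rw [convexHull_range_eq_exists_affineCombination] at hz
  obtain ⟨t, w, hw₀, hw₁, rfl⟩ := hz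
  obtain ⟨n, htn⟩ := t.exists_nat_subset_range
  have hw (k : ℕ) : (t : Set ℕ).indicator w k ≤ 1 :=
    indicator_apply_le' (fun hk => hw₁ ▸ Finset.single_le_sum hw₀ hk) fun _ => zero_le_one
  refine ⟨n, (t : Set ℕ).indicator w, fun k => ⟨indicator_nonneg hw₀ k, hw k⟩, ?_, ?_⟩
  · rw [Finset.sum_indicator_subset w htn, hw₁]
  · rw [Finset.affineCombination_eq_linear_combination _ _ _ hw₁]
    exact Finset.sum_indicator_subset_of_eq_zero w (fun k r => r • x k) htn fun k => zero_smul ℝ _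

end ClosedConvexHull

section StronglyExposed

lemma isSCD_of_forall_exists_isSlice_subset_ball {A : Set X} {p : ℕ → X}
    (hA : A ⊆ closedConvexHull ℝ (range p))
    (hp : ∀ n, ∀ ε > 0, ∃ S, IsSlice A S ∧ S ⊆ ball (p n) ε) : IsSCD A := by
  choose S hS hSball using fun n k : ℕ => hp n (1 / ((k : ℝ) + 1)) Nat.one_div_pos_of_nat
  refine ⟨fun i => S i.unpair.1 i.unpair.2, fun i => hS _ _, fun B hB => ?_⟩
  rw [← closedConvexHull_eq_closure_convexHull]
  refine hA.trans (closedConvexHull_min ?_ convex_closedConvexHull isClosed_closedConvexHull)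
  rintro _ ⟨n, rfl⟩
  refine closure_subset_closedConvexHull (Metric.mem_closure_iff.mpr fun ε hε => ?_)
  obtain ⟨k, hk⟩ := exists_nat_one_div_lt hε
  obtain ⟨b, hbB, hbS⟩ := hB (Nat.pair n k)
  simp only [Nat.unpair_pair] at hbS
  exact ⟨b, hbB, (mem_ball'.mp (hSball n k hbS)).trans hk⟩

lemma exists_isSlice_subset_ball_of_dist_le {A : Set X} {p : X} (hpA : p ∈ A)
    {g : X →L[ℝ] ℝ} (hg : g ≠ 0) {κ : ℝ} (hκ : 0 < κ)
    (hexp : ∀ x ∈ A, dist x p ≤ κ * (g p - g x)) {ε : ℝ} (hε : 0 < ε) :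
    ∃ S, IsSlice A S ∧ S ⊆ ball p ε := by
  have hle : ∀ x ∈ A, g x ≤ g p := fun x hx =>
    sub_nonneg.mp (nonneg_of_mul_nonneg_right (dist_nonneg.trans (hexp x hx)) hκ)
  have hsup : sSup (g '' A) = g p :=
    IsGreatest.csSup_eq ⟨mem_image_of_mem g hpA, forall_mem_image.mpr hle⟩
  have hεκ : 0 < ε / κ := div_pos hε hκ
  refine ⟨sliceSet A g (ε / κ), ⟨⟨p, hpA, ?_⟩, g, hg, ε / κ, hεκ, rfl⟩, ?_⟩
  · rw [hsup]
    exact sub_lt_self _ hεκ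
  · rintro x ⟨hxA, hx⟩
    rw [hsup, sub_lt_comm, lt_div_iff₀' hκ] at hx
    exact mem_ball.mpr ((hexp x hxA).trans_lt hx)

lemma dist_le_of_mem_closedConvexHull {s : Set X} {p : X} {g : X →L[ℝ] ℝ} {κ : ℝ}
    (hexp : ∀ x ∈ s, dist x p ≤ κ * (g p - g x)) :
    ∀ x ∈ closedConvexHull ℝ s, dist x p ≤ κ * (g p - g x) := by
  have hconv : Convex ℝ {x | dist x p ≤ κ * (g p - g x)} := by
    have hsum := (convexOn_univ_dist p).add ((κ • g).toLinearMap.convexOn convex_univ)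
    convert hsum.convex_le (κ * g p) using 1
    ext x
    simp [mul_sub, le_sub_iff_add_le]
  have hclosed : IsClosed {x | dist x p ≤ κ * (g p - g x)} :=
    isClosed_le (by fun_prop) (by fun_prop)
  exact closedConvexHull_min hexp hconv hclosed

lemma isSCD_closedConvexHull_range {p : ℕ → X} {g : ℕ → X →L[ℝ] ℝ} {κ : ℕ → ℝ}
    (hg : ∀ n, g n ≠ 0) (hκ : ∀ n, 0 < κ n)
    (hexp : ∀ n m, dist (p m) (p n) ≤ κ n * (g n (p n) - g n (p m))) :
    IsSCD (closedConvexHull ℝ (range p)) :=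
  isSCD_of_forall_exists_isSlice_subset_ball Subset.rfl fun n _ hε =>
    exists_isSlice_subset_ball_of_dist_le (subset_closedConvexHull (mem_range_self n)) (hg n) (hκ n)
      (dist_le_of_mem_closedConvexHull (forall_mem_range.mpr (hexp n))) hε

end StronglyExposed

section ParabolicLift

/-- `e₁, e₂` and `h₁, h₂` form a biorthogonal system: `hᵢ eⱼ = δᵢⱼ`. -/
structure IsBiorthogonalPair (e₁ e₂ : X) (h₁ h₂ : X →L[ℝ] ℝ) : Prop where
  fst_fst : h₁ e₁ = 1
  fst_snd : h₁ e₂ = 0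
  snd_fst : h₂ e₁ = 0
  snd_snd : h₂ e₂ = 1

/-- The projection `x ↦ h₁ x • e₁ + h₂ x • e₂` onto the span of the vectors of a biorthogonal
pair. -/
noncomputable def coordProj (e₁ e₂ : X) (h₁ h₂ : X →L[ℝ] ℝ) : X →L[ℝ] X :=
  h₁.smulRight e₁ + h₂.smulRight e₂

/-- The points `qₙ` moved off the common kernel of `h₁, h₂` along the parabola
`t ↦ t • e₁ + t ^ 2 • e₂`, at the parameters `t = 2⁻ⁿ`. -/
noncomputable def parabolicLift (q : ℕ → X) (e₁ e₂ : X) (n : ℕ) : X :=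
  q n + (1 / 2 : ℝ) ^ n • e₁ + ((1 / 2 : ℝ) ^ n) ^ 2 • e₂

variable {e₁ e₂ : X} {h₁ h₂ : X →L[ℝ] ℝ} {q : ℕ → X}

lemma IsBiorthogonalPair.neg_fst (hpair : IsBiorthogonalPair e₁ e₂ h₁ h₂) :
    IsBiorthogonalPair (-e₁) e₂ (-h₁) h₂ where
  fst_fst := by simp [hpair.fst_fst]
  fst_snd := by simp [hpair.fst_snd]
  snd_fst := by simp [hpair.snd_fst]
  snd_snd := hpair.snd_snd

lemma coordProj_apply (x : X) : coordProj e₁ e₂ h₁ h₂ x = h₁ x • e₁ + h₂ x • e₂ := rfl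

lemma IsBiorthogonalPair.fst_coordProj (hpair : IsBiorthogonalPair e₁ e₂ h₁ h₂) (x : X) :
    h₁ (coordProj e₁ e₂ h₁ h₂ x) = h₁ x := by
  simp [coordProj_apply, hpair.fst_fst, hpair.fst_snd]

lemma IsBiorthogonalPair.snd_coordProj (hpair : IsBiorthogonalPair e₁ e₂ h₁ h₂) (x : X) :
    h₂ (coordProj e₁ e₂ h₁ h₂ x) = h₂ x := by
  simp [coordProj_apply, hpair.snd_fst, hpair.snd_snd]

lemma IsBiorthogonalPair.fst_parabolicLift (hpair : IsBiorthogonalPair e₁ e₂ h₁ h₂) {n : ℕ}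
    (hq : h₁ (q n) = 0) : h₁ (parabolicLift q e₁ e₂ n) = (1 / 2 : ℝ) ^ n := by
  simp [parabolicLift, hq, hpair.fst_fst, hpair.fst_snd]

lemma IsBiorthogonalPair.snd_parabolicLift (hpair : IsBiorthogonalPair e₁ e₂ h₁ h₂) {n : ℕ}
    (hq : h₂ (q n) = 0) : h₂ (parabolicLift q e₁ e₂ n) = ((1 / 2 : ℝ) ^ n) ^ 2 := by
  simp [parabolicLift, hq, hpair.snd_fst, hpair.snd_snd]

lemma isBounded_range_parabolicLift (hq : IsBounded (range q)) (e₁ e₂ : X) :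
    IsBounded (range (parabolicLift q e₁ e₂)) := by
  obtain ⟨R, hR⟩ := isBounded_iff_forall_norm_le.mp hq
  refine isBounded_iff_forall_norm_le.mpr ⟨R + ‖e₁‖ + ‖e₂‖, forall_mem_range.mpr fun n => ?_⟩
  have ht : (1 / 2 : ℝ) ^ n ≤ 1 := pow_le_one₀ (by norm_num) (by norm_num)
  calc ‖parabolicLift q e₁ e₂ n‖
      ≤ ‖q n‖ + (1 / 2 : ℝ) ^ n * ‖e₁‖ + ((1 / 2 : ℝ) ^ n) ^ 2 * ‖e₂‖ := by
        refine norm_add₃_le.trans_eq ?_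
        simp [norm_smul]
    _ ≤ R + 1 * ‖e₁‖ + 1 * ‖e₂‖ := by
        gcongr
        · exact hR _ (mem_range_self n)
        · exact pow_le_one₀ (by positivity) ht
    _ = R + ‖e₁‖ + ‖e₂‖ := by rw [one_mul, one_mul]

lemma sq_half_pow_succ_le_sq_sub {m n : ℕ} (hmn : m ≠ n) :
    ((1 / 2 : ℝ) ^ (n + 1)) ^ 2 ≤ ((1 / 2 : ℝ) ^ n - (1 / 2 : ℝ) ^ m) ^ 2 := by
  have hhalf {i j : ℕ} (hij : i < j) : (1 / 2 : ℝ) ^ j ≤ (1 / 2 : ℝ) ^ i / 2 := by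
    have := pow_le_pow_of_le_one (a := (1 / 2 : ℝ)) (by norm_num) (by norm_num)
      (Nat.succ_le_of_lt hij)
    rwa [pow_succ, mul_one_div] at this
  have hn : (1 / 2 : ℝ) ^ (n + 1) = (1 / 2 : ℝ) ^ n / 2 := by ring
  have hpos : 0 < (1 / 2 : ℝ) ^ n := by positivity
  rw [hn, sq_le_sq, abs_of_pos (by positivity), le_abs]
  rcases hmn.lt_or_gt with hlt | hlt
  · right
    linarith [hhalf hlt]
  · left
    linarith [hhalf hlt]

/-- The functional `2 t • h₁ - h₂` with `t = 2⁻ⁿ` is the tangent to the parabola at the `n`-th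
point, so it exposes that point with defect `(2⁻ⁿ - 2⁻ᵐ) ^ 2` at the `m`-th one. -/
lemma IsBiorthogonalPair.isSCD_closedConvexHull_parabolicLift
    (hpair : IsBiorthogonalPair e₁ e₂ h₁ h₂) (hq : IsBounded (range q))
    (hq₁ : ∀ n, h₁ (q n) = 0) (hq₂ : ∀ n, h₂ (q n) = 0) :
    IsSCD (closedConvexHull ℝ (range (parabolicLift q e₁ e₂))) := by
  set t : ℕ → ℝ := fun n => (1 / 2) ^ n
  set p := parabolicLift q e₁ e₂
  set g : ℕ → X →L[ℝ] ℝ := fun n => (2 * t n) • h₁ - h₂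
  obtain ⟨R, hR₀, hR⟩ := (isBounded_range_parabolicLift hq e₁ e₂).exists_pos_norm_le
  have hdefect (n m : ℕ) : g n (p n) - g n (p m) = (t n - t m) ^ 2 := by
    simp only [g, p, t, sub_apply, smul_apply,
      smul_eq_mul, hpair.fst_parabolicLift (hq₁ _), hpair.snd_parabolicLift (hq₂ _)]
    ring
  have hg (n : ℕ) : g n ≠ 0 := fun h => by
    have := congrArg (fun f : X →L[ℝ] ℝ => f e₂) h
    simp [g, hpair.fst_snd, hpair.snd_snd] at this
  refine isSCD_closedConvexHull_range (κ := fun n => (R + R) / t (n + 1) ^ 2) hg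
    (fun n => by positivity) fun n m => ?_
  rw [hdefect]
  rcases eq_or_ne m n with rfl | hmn
  · simp
  calc dist (p m) (p n) ≤ R + R :=
        (dist_le_norm_add_norm _ _).trans
          (add_le_add (hR _ (mem_range_self m)) (hR _ (mem_range_self n)))
    _ = (R + R) / t (n + 1) ^ 2 * t (n + 1) ^ 2 := by
        rw [div_mul_cancel₀]
        positivity
    _ ≤ (R + R) / t (n + 1) ^ 2 * (t n - t m) ^ 2 :=
        mul_le_mul_of_nonneg_left (sq_half_pow_succ_le_sq_sub hmn) (by positivity)

lemma IsBiorthogonalPair.snd_nonneg_of_mem_closedConvexHull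
    (hpair : IsBiorthogonalPair e₁ e₂ h₁ h₂) (hq₂ : ∀ n, h₂ (q n) = 0) {x : X}
    (hx : x ∈ closedConvexHull ℝ (range (parabolicLift q e₁ e₂))) : 0 ≤ h₂ x := by
  have : (-h₂) x ≤ 0 := le_of_mem_closedConvexHull (forall_mem_range.mpr fun n => by
    rw [neg_apply, hpair.snd_parabolicLift (hq₂ n), neg_nonpos]
    positivity) hx
  simpa using this

lemma IsBiorthogonalPair.snd_le_fst_of_mem_closedConvexHull
    (hpair : IsBiorthogonalPair e₁ e₂ h₁ h₂) (hq₁ : ∀ n, h₁ (q n) = 0) (hq₂ : ∀ n, h₂ (q n) = 0)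
    {x : X} (hx : x ∈ closedConvexHull ℝ (range (parabolicLift q e₁ e₂))) : h₂ x ≤ h₁ x := by
  have : (h₂ - h₁) x ≤ 0 := le_of_mem_closedConvexHull (forall_mem_range.mpr fun n => by
    rw [sub_apply, hpair.snd_parabolicLift (hq₂ n), hpair.fst_parabolicLift (hq₁ n), sub_nonpos]
    exact pow_le_of_le_one (by positivity) (pow_le_one₀ (by norm_num) (by norm_num))
      two_ne_zero) hx
  simpa using this

lemma IsBiorthogonalPair.sub_coordProj_mem_closedConvexHull
    (hpair : IsBiorthogonalPair e₁ e₂ h₁ h₂) (hq₁ : ∀ n, h₁ (q n) = 0) (hq₂ : ∀ n, h₂ (q n) = 0)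
    {x : X} (hx : x ∈ closedConvexHull ℝ (range (parabolicLift q e₁ e₂))) :
    x - coordProj e₁ e₂ h₁ h₂ x ∈ closedConvexHull ℝ (range q) := by
  set Q := ContinuousLinearMap.id ℝ X - coordProj e₁ e₂ h₁ h₂
  have hQ (n : ℕ) : Q (parabolicLift q e₁ e₂ n) = q n := by
    simp only [Q, sub_apply, ContinuousLinearMap.id_apply, coordProj_apply,
      hpair.fst_parabolicLift (hq₁ n), hpair.snd_parabolicLift (hq₂ n)]
    rw [parabolicLift]
    abel
  refine closedConvexHull_min (𝕜 := ℝ) (t := Q ⁻¹' closedConvexHull ℝ (range q)) ?_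
    (convex_closedConvexHull.linear_preimage Q.toLinearMap)
    (isClosed_closedConvexHull.preimage Q.continuous) hx
  rintro _ ⟨n, rfl⟩
  rw [mem_preimage, hQ]
  exact subset_closedConvexHull (mem_range_self n)

lemma mem_closedConvexHull_parabolicLift_of_mapClusterPt {x : X} (hx : MapClusterPt x atTop q)
    (e₁ e₂ : X) :
    x ∈ closedConvexHull ℝ (range (parabolicLift q e₁ e₂)) := by
  obtain ⟨ψ, hψ, hqψ⟩ := hx.tendsto_subseq
  have ht : Tendsto (fun n => (1 / 2 : ℝ) ^ ψ n) atTop (𝓝 0) :=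
    (tendsto_pow_atTop_nhds_zero_of_lt_one (by norm_num) (by norm_num)).comp hψ.tendsto_atTop
  have hlift : Tendsto (fun n => parabolicLift q e₁ e₂ (ψ n)) atTop (𝓝 x) := by
    have := (hqψ.add (ht.smul_const e₁)).add ((ht.pow 2).smul_const e₂)
    rwa [zero_pow two_ne_zero, zero_smul, zero_smul, add_zero, add_zero] at this
  exact isClosed_closedConvexHull.mem_of_tendsto hlift
    (Eventually.of_forall fun n => subset_closedConvexHull (mem_range_self (ψ n)))

theorem IsBiorthogonalPair.exists_isSCD_inter_eq (hpair : IsBiorthogonalPair e₁ e₂ h₁ h₂)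
    {K : Set X} (hne : K.Nonempty) (hsep : IsSeparable K) (hbdd : IsBounded K)
    (hconv : Convex ℝ K) (hclosed : IsClosed K) (hK₁ : ∀ x ∈ K, h₁ x = 0)
    (hK₂ : ∀ x ∈ K, h₂ x = 0) :
    ∃ A D : Set X, Convex ℝ A ∧ IsClosed A ∧ IsBounded A ∧ IsSCD A ∧
      Convex ℝ D ∧ IsClosed D ∧ IsBounded D ∧ IsSCD D ∧ A ∩ D = K := by
  obtain ⟨q, hqK, hqcluster⟩ := exists_seq_forall_mapClusterPt hsep hne
  have hqbdd : IsBounded (range q) := hbdd.subset (range_subset_iff.mpr hqK)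
  have hq₁ (n : ℕ) : h₁ (q n) = 0 := hK₁ _ (hqK n)
  have hq₂ (n : ℕ) : h₂ (q n) = 0 := hK₂ _ (hqK n)
  have hq₁' (n : ℕ) : (-h₁) (q n) = 0 := by simp [hq₁]
  have hbddHull (e : X) : IsBounded (closedConvexHull ℝ (range (parabolicLift q e e₂))) := by
    rw [closedConvexHull_eq_closure_convexHull]
    exact (isBounded_convexHull.mpr (isBounded_range_parabolicLift hqbdd e e₂)).closure
  refine ⟨closedConvexHull ℝ (range (parabolicLift q e₁ e₂)),
    closedConvexHull ℝ (range (parabolicLift q (-e₁) e₂)),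
    convex_closedConvexHull, isClosed_closedConvexHull, hbddHull e₁,
    hpair.isSCD_closedConvexHull_parabolicLift hqbdd hq₁ hq₂,
    convex_closedConvexHull, isClosed_closedConvexHull, hbddHull (-e₁),
    hpair.neg_fst.isSCD_closedConvexHull_parabolicLift hqbdd hq₁' hq₂, Subset.antisymm ?_ ?_⟩
  · rintro x ⟨hxA, hxD⟩
    have h₂_nonneg := hpair.snd_nonneg_of_mem_closedConvexHull hq₂ hxA
    have h₂_le := hpair.snd_le_fst_of_mem_closedConvexHull hq₁ hq₂ hxA
    have h₂_le_neg := hpair.neg_fst.snd_le_fst_of_mem_closedConvexHull hq₁' hq₂ hxD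
    rw [neg_apply] at h₂_le_neg
    have hx := hpair.sub_coordProj_mem_closedConvexHull hq₁ hq₂ hxA
    have hx₁ : h₁ x = 0 := by linarith
    have hx₂ : h₂ x = 0 := by linarith
    rw [coordProj_apply, hx₁, hx₂, zero_smul, zero_smul, add_zero, sub_zero] at hx
    exact closedConvexHull_min (range_subset_iff.mpr hqK) hconv hclosed hx
  · exact fun x hx =>
      ⟨mem_closedConvexHull_parabolicLift_of_mapClusterPt (hqcluster x hx) e₁ e₂,
        mem_closedConvexHull_parabolicLift_of_mapClusterPt (hqcluster x hx) (-e₁) e₂⟩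

end ParabolicLift

section DaugavetSubspace

/-- The open unit ball of a subspace `Y`, as a subset of the ambient space. -/
def openUnitBall (Y : Submodule ℝ X) : Set X := (Y : Set X) ∩ ball 0 1

/-- The points `x` of the open unit ball of `Y` for which the triangle inequality
`‖y + x‖ ≤ ‖y‖ + 1` is an equality up to `δ`. -/
def almostAligned (Y : Submodule ℝ X) (y : X) (δ : ℝ) : Set X :=
  {x ∈ openUnitBall Y | ‖y‖ + 1 - δ < ‖y + x‖}

/-- The geometric form of the Daugavet property for a subspace `Y`: its unit ball is contained in
the closed convex hull of the vectors almost aligned with any prescribed `y ∈ Y`. -/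
def IsDaugavetSubspace (Y : Submodule ℝ X) : Prop :=
  ∀ y ∈ Y, ∀ δ > 0, openUnitBall Y ⊆ closedConvexHull ℝ (almostAligned Y y δ)

variable {Y Z : Submodule ℝ X} {y z : X} {δ ε : ℝ}

lemma openUnitBall_mono (hZY : Z ≤ Y) : openUnitBall Z ⊆ openUnitBall Y :=
  inter_subset_inter_left _ hZY

lemma almostAligned_mono (hZY : Z ≤ Y) : almostAligned Z y δ ⊆ almostAligned Y y δ :=
  fun _ hx => ⟨openUnitBall_mono hZY hx.1, hx.2⟩

lemma almostAligned_subset_of_dist_le (h : 2 * dist y z + ε ≤ δ) :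
    almostAligned Y z ε ⊆ almostAligned Y y δ := by
  rintro x ⟨hxY, hx⟩
  have hnorm : ‖y‖ ≤ ‖z‖ + dist y z := by
    rw [dist_eq_norm]
    exact norm_le_norm_add_norm_sub' y z
  have hnorm_add : ‖z + x‖ ≤ ‖y + x‖ + dist y z := by
    rw [← dist_add_right y z x, dist_eq_norm]
    exact norm_le_norm_add_norm_sub (y + x) (z + x)
  exact ⟨hxY, by linarith⟩

lemma DaugavetProperty.exists_lt_norm_add_smul (h : DaugavetProperty X) {φ : X →L[ℝ] ℝ}
    (hφ : ‖φ‖ = 1) (y : X) (hε : 0 < ε) :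
    ∃ x, ‖x‖ < 1 ∧ 0 ≤ φ x ∧ 1 + ‖y‖ - ε < ‖x + φ x • y‖ := by
  have hnorm : ‖ContinuousLinearMap.id ℝ X + φ.smulRight y‖ = 1 + ‖y‖ := by
    rw [h φ y, ContinuousLinearMap.norm_smulRight_apply, hφ, one_mul]
  obtain ⟨x, hx₁, hx⟩ :=
    (ContinuousLinearMap.id ℝ X + φ.smulRight y).exists_lt_apply_of_lt_opNorm
      (r := 1 + ‖y‖ - ε) (by rw [hnorm]; linarith)
  change _ < ‖x + φ x • y‖ at hx
  rcases le_total 0 (φ x) with hφx | hφx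
  · exact ⟨x, hx₁, hφx, hx⟩
  · refine ⟨-x, by rwa [norm_neg], by rwa [map_neg, neg_nonneg], ?_⟩
    rwa [map_neg, neg_smul, ← neg_add, norm_neg]

lemma DaugavetProperty.exists_mem_almostAligned_lt_of_ne_zero (h : DaugavetProperty X)
    {φ : X →L[ℝ] ℝ} (hφ : ‖φ‖ = 1) (hy : y ≠ 0) (hδ : 0 < δ) :
    ∃ x ∈ almostAligned ⊤ y δ, 1 - δ < φ x := by
  have hy₀ : 0 < ‖y‖ := norm_pos_iff.mpr hy
  obtain ⟨x, hx₁, hφx₀, hx⟩ :=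
    h.exists_lt_norm_add_smul hφ y (lt_min (half_pos hδ) (mul_pos hδ hy₀))
  have hφx₁ : φ x ≤ 1 := by
    have := φ.le_of_opNorm_le hφ.le x
    linarith [Real.le_norm_self (φ x)]
  have hε_half := min_le_left (δ / 2) (δ * ‖y‖)
  have hε_mul := min_le_right (δ / 2) (δ * ‖y‖)
  have hdefect : (1 - φ x) * ‖y‖ < min (δ / 2) (δ * ‖y‖) := by
    have := norm_add_le x (φ x • y)
    rw [norm_smul_of_nonneg hφx₀] at this
    linarith
  have hnorm : ‖x + φ x • y‖ ≤ ‖y + x‖ + (1 - φ x) * ‖y‖ := by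
    have := norm_sub_le (y + x) ((1 - φ x) • y)
    rwa [norm_smul_of_nonneg (sub_nonneg.mpr hφx₁),
      show y + x - (1 - φ x) • y = x + φ x • y by module] at this
  refine ⟨x, ⟨⟨Submodule.mem_top, mem_ball_zero_iff.mpr hx₁⟩, by linarith⟩, ?_⟩
  have : 1 - φ x < δ := lt_of_mul_lt_mul_right (hdefect.trans_le hε_mul) hy₀.le
  linarith

lemma DaugavetProperty.exists_mem_almostAligned_lt (h : DaugavetProperty X) {φ : X →L[ℝ] ℝ}
    (hφ : ‖φ‖ = 1) (y : X) (hδ : 0 < δ) :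
    ∃ x ∈ almostAligned ⊤ y δ, 1 - δ < φ x := by
  rcases eq_or_ne y 0 with rfl | hy
  · have hφ₀ : φ ≠ 0 := norm_ne_zero_iff.mp (hφ ▸ one_ne_zero)
    obtain ⟨e, he⟩ := DFunLike.ne_iff.mp hφ₀
    have he₀ : e ≠ 0 := fun h₀ => he (by simp [h₀])
    obtain ⟨x, ⟨hx₁, hx⟩, hφx⟩ := h.exists_mem_almostAligned_lt_of_ne_zero hφ he₀ hδ
    refine ⟨x, ⟨hx₁, ?_⟩, hφx⟩
    rw [norm_zero, zero_add, zero_add]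
    linarith [norm_add_le e x]
  · exact h.exists_mem_almostAligned_lt_of_ne_zero hφ hy hδ

lemma DaugavetProperty.exists_add_smul_ne_zero (h : DaugavetProperty X) (f : X →L[ℝ] ℝ) (y : X) :
    ∃ x, x + f x • y ≠ 0 := by
  by_contra! hzero
  have hnorm := h f y
  rw [show ContinuousLinearMap.id ℝ X + f.smulRight y = 0 from ContinuousLinearMap.ext hzero,
    norm_zero] at hnorm
  linarith [norm_nonneg (f.smulRight y)]

lemma DaugavetProperty.nontrivial (h : DaugavetProperty X) : Nontrivial X := by
  obtain ⟨x, hx⟩ := h.exists_add_smul_ne_zero 0 0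
  exact ⟨_, _, hx⟩

lemma DaugavetProperty.isDaugavetSubspace_top (h : DaugavetProperty X) :
    IsDaugavetSubspace (⊤ : Submodule ℝ X) := by
  intro y _ δ hδ c hc
  have := h.nontrivial
  by_contra hnot
  obtain ⟨f, a, hfa, hac⟩ := geometric_hahn_banach_closed_point
    convex_closedConvexHull isClosed_closedConvexHull hnot
  have hfa {x : X} (hx : x ∈ almostAligned ⊤ y δ) : f x < a := hfa x (subset_closedConvexHull hx)
  have hf : 0 < ‖f‖ := norm_pos_iff.mpr fun hf => by
    obtain ⟨φ, hφ, -⟩ := exists_dual_vector' ℝ (0 : X)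
    obtain ⟨x, hx, -⟩ := h.exists_mem_almostAligned_lt hφ y hδ
    have := hfa hx
    simp only [hf, zero_apply] at this hac
    linarith
  have ha : a < ‖f‖ := hac.trans_le <| (Real.le_norm_self _).trans <|
    (f.le_opNorm c).trans (mul_le_of_le_one_right hf.le (mem_ball_zero_iff.mp hc.2).le)
  obtain ⟨x, hx, hfx⟩ := h.exists_mem_almostAligned_lt (φ := ‖f‖⁻¹ • f)
    (by rw [norm_smul, norm_inv, norm_norm, inv_mul_cancel₀ hf.ne']) y
    (lt_min hδ (sub_pos.mpr ((div_lt_one hf).mpr ha)))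
  have hxδ : x ∈ almostAligned ⊤ y δ := almostAligned_subset_of_dist_le (by simp) hx
  have : a / ‖f‖ < f x / ‖f‖ := by
    have := min_le_right δ (1 - a / ‖f‖)
    rw [smul_apply, smul_eq_mul, inv_mul_eq_div] at hfx
    linarith
  exact (hfa hxδ).not_gt ((div_lt_div_iff_of_pos_right hf).mp this)

lemma DaugavetProperty.exists_separable_extension (h : DaugavetProperty X)
    (hZ : IsSeparable (Z : Set X)) :
    ∃ Y, Z ≤ Y ∧ IsSeparable (Y : Set X) ∧
      ∀ y ∈ Z, ∀ δ > 0, openUnitBall Z ⊆ closedConvexHull ℝ (almostAligned Y y δ) := by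
  obtain ⟨D, -, hDc, hZD⟩ := hZ.exists_countable_dense_subset
  choose t ht htc hZt using fun (y : X) (k : ℕ) =>
    exists_countable_subset_subset_closedConvexHull (hZ.mono inter_subset_left)
      ((openUnitBall_mono le_top).trans
        (h.isDaugavetSubspace_top y Submodule.mem_top _ (Nat.one_div_pos_of_nat (n := k))))
  set T : Set X := ⋃ y ∈ D, ⋃ k, t y k
  have hT : T.Countable := hDc.biUnion fun y _ => countable_iUnion (htc y)
  refine ⟨.span ℝ (Z ∪ T), fun x hx => Submodule.subset_span (.inl hx),
    (hZ.union hT.isSeparable).span, fun y hy δ hδ => ?_⟩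
  obtain ⟨d, hd, hyd⟩ := Metric.mem_closure_iff.mp (hZD hy) (δ / 4) (by positivity)
  obtain ⟨k, hk⟩ := exists_nat_one_div_lt (half_pos hδ)
  refine (hZt d k).trans ((closedConvexHull ℝ).monotone ?_)
  have htT : t d k ⊆ T := (subset_iUnion (t d) k).trans
    (subset_biUnion_of_mem (u := fun y => ⋃ k, t y k) hd)
  have htk : t d k ⊆ almostAligned (.span ℝ (Z ∪ T)) d (1 / (k + 1)) := fun x hx =>
    ⟨⟨Submodule.subset_span (.inr (htT hx)), (ht d k hx).1.2⟩, (ht d k hx).2⟩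
  exact htk.trans (almostAligned_subset_of_dist_le (by linarith))

lemma DaugavetProperty.exists_separable_isDaugavetSubspace (h : DaugavetProperty X)
    (hZ : IsSeparable (Z : Set X)) :
    ∃ Y, Z ≤ Y ∧ IsSeparable (Y : Set X) ∧ IsDaugavetSubspace Y := by
  choose! F hF_le hF_sep hF using fun (V : Submodule ℝ X) (hV : IsSeparable (V : Set X)) =>
    h.exists_separable_extension hV
  set W : ℕ → Submodule ℝ X := fun n => F^[n] Z
  have hW_succ (n : ℕ) : W (n + 1) = F (W n) := Function.iterate_succ_apply' F n Z
  have hW_sep (n : ℕ) : IsSeparable (W n : Set X) := by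
    induction n with
    | zero => exact hZ
    | succ n ih => exact hW_succ n ▸ hF_sep _ ih
  have hW_mono : Monotone W := monotone_nat_of_le_succ fun n => hW_succ n ▸ hF_le _ (hW_sep n)
  have hW_iSup (x : X) : x ∈ ⨆ n, W n ↔ ∃ n, x ∈ W n :=
    Submodule.mem_iSup_of_directed W hW_mono.directed_le
  refine ⟨⨆ n, W n, le_iSup W 0, ?_, ?_⟩
  · rw [Submodule.coe_iSup_of_directed W hW_mono.directed_le]
    exact .iUnion hW_sep
  · rintro y hy δ hδ x ⟨hx, hx₁⟩
    obtain ⟨i, hyi⟩ := (hW_iSup y).mp hy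
    obtain ⟨j, hxj⟩ := (hW_iSup x).mp hx
    have hyn : y ∈ W (max i j) := hW_mono (le_max_left i j) hyi
    have hxn : x ∈ openUnitBall (W (max i j)) := ⟨hW_mono (le_max_right i j) hxj, hx₁⟩
    have hle : F (W (max i j)) ≤ ⨆ n, W n := hW_succ (max i j) ▸ le_iSup W _
    exact (closedConvexHull ℝ).monotone (almostAligned_mono hle)
      (hF _ (hW_sep _) y hyn δ hδ hxn)

end DaugavetSubspace

section BallCap

/-- The part of the open unit ball of `Y` cut off by the half-space `{x | a < f x}`. -/
def ballCap (Y : Submodule ℝ X) (f : X →L[ℝ] ℝ) (a : ℝ) : Set X :=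
  {x ∈ openUnitBall Y | a < f x}

variable {Y : Submodule ℝ X} {f : X →L[ℝ] ℝ} {a : ℝ} {y : X} {δ : ℝ}

lemma convex_openUnitBall (Y : Submodule ℝ X) : Convex ℝ (openUnitBall Y) :=
  Y.convex.inter (convex_ball 0 1)

lemma isBounded_openUnitBall (Y : Submodule ℝ X) : IsBounded (openUnitBall Y) :=
  isBounded_ball.subset inter_subset_right

lemma zero_mem_openUnitBall (Y : Submodule ℝ X) : (0 : X) ∈ openUnitBall Y :=
  ⟨Y.zero_mem, mem_ball_self one_pos⟩

/-- If `x` is almost aligned with `y` and almost maximizes `f`, then `f` plus a norming functional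
of `y + x` cuts off a cap on which both properties persist. -/
lemma IsDaugavetSubspace.exists_ballCap_subset (hY : IsDaugavetSubspace Y)
    (hcap : (ballCap Y f a).Nonempty) (hy : y ∈ Y) (hδ : 0 < δ) :
    ∃ f₁ a₁, (ballCap Y f₁ a₁).Nonempty ∧
      ballCap Y f₁ a₁ ⊆ ballCap Y f a ∩ almostAligned Y y δ := by
  obtain ⟨c, hc, hac⟩ := hcap
  set M := sSup (f '' openUnitBall Y)
  have hbdd : BddAbove (f '' openUnitBall Y) :=
    ((isBounded_openUnitBall Y).image f).bddAbove
  have hfM {x : X} (hx : x ∈ openUnitBall Y) : f x ≤ M := le_csSup hbdd (mem_image_of_mem f hx)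
  obtain ⟨η, hη, hηmin⟩ : ∃ η > 0, 3 * η ≤ min δ (M - a) :=
    ⟨min δ (M - a) / 3, div_pos (lt_min hδ (sub_pos.mpr (hac.trans_le (hfM hc)))) three_pos,
      by linarith⟩
  obtain ⟨hηδ, hηM⟩ := le_min_iff.mp hηmin
  obtain ⟨_, ⟨c', hc', rfl⟩, hfc'⟩ :=
    exists_lt_of_lt_csSup ⟨_, mem_image_of_mem f hc⟩ (sub_lt_self M hη)
  obtain ⟨x, ⟨hx, hyx⟩, hfx⟩ := exists_lt_of_mem_closedConvexHull (hY y hy η hη hc') hfc'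
  obtain ⟨g, hg₁, hgyx⟩ := exists_dual_vector'' ℝ (y + x)
  have hg (v : X) : g v ≤ ‖v‖ := by
    have := g.le_of_opNorm_le hg₁ v
    linarith [Real.le_norm_self (g v)]
  have hg_lt {v : X} (hv : v ∈ openUnitBall Y) : g v < 1 :=
    (hg v).trans_lt (mem_ball_zero_iff.mp hv.2)
  have hgyx : g y + g x = ‖y + x‖ := by simpa using hgyx
  refine ⟨f + g, M + 1 - 2 * η, ⟨x, hx, ?_⟩, ?_⟩
  · rw [add_apply]
    linarith [hg y]
  · rintro v ⟨hv, hfgv⟩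
    rw [add_apply] at hfgv
    have hgyv : g y + g v ≤ ‖y + v‖ := map_add g y v ▸ hg (y + v)
    exact ⟨⟨hv, by linarith [hg_lt hv]⟩, hv, by linarith [hg_lt hx, hfM hv]⟩

lemma IsDaugavetSubspace.exists_ballCap_subset_of_finite (hY : IsDaugavetSubspace Y) {N : Set X}
    (hN : N.Finite) (hNY : N ⊆ Y) (hδ : 0 < δ) (hcap : (ballCap Y f a).Nonempty) :
    ∃ f₁ a₁, (ballCap Y f₁ a₁).Nonempty ∧ ballCap Y f₁ a₁ ⊆ ballCap Y f a ∧
      ∀ y ∈ N, ballCap Y f₁ a₁ ⊆ almostAligned Y y δ := by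
  induction N, hN using Set.Finite.induction_on with
  | empty => exact ⟨f, a, hcap, Subset.rfl, fun _ hy => hy.elim⟩
  | insert _ _ ih =>
    obtain ⟨hyY, hNY⟩ := insert_subset_iff.mp hNY
    obtain ⟨f₁, a₁, hcap₁, hsub₁, hN₁⟩ := ih hNY
    obtain ⟨f₂, a₂, hcap₂, hsub₂⟩ := hY.exists_ballCap_subset hcap₁ hyY hδ
    obtain ⟨hsub₂, hy₂⟩ := subset_inter_iff.mp hsub₂
    exact ⟨f₂, a₂, hcap₂, hsub₂.trans hsub₁,
      forall_mem_insert.mpr ⟨hy₂, fun z hz => hsub₂.trans (hN₁ z hz)⟩⟩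

lemma IsDaugavetSubspace.exists_mem_ballCap_forall_mem_almostAligned (hY : IsDaugavetSubspace Y)
    {K : Set X} (hK : IsCompact K) (hKY : K ⊆ Y) (hδ : 0 < δ) (hcap : (ballCap Y f a).Nonempty) :
    ∃ x ∈ ballCap Y f a, ∀ y ∈ K, x ∈ almostAligned Y y δ := by
  obtain ⟨N, hNK, hN, hKN⟩ := hK.finite_cover_balls (e := δ / 4) (by positivity)
  obtain ⟨f₁, a₁, ⟨x, hx⟩, hsub, halign⟩ :=
    hY.exists_ballCap_subset_of_finite hN (hNK.trans hKY) (half_pos hδ) hcap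
  refine ⟨x, hsub hx, fun y hy => ?_⟩
  obtain ⟨z, hz, hyz⟩ := mem_iUnion₂.mp (hKN hy)
  exact almostAligned_subset_of_dist_le (by linarith [mem_ball.mp hyz]) (halign z hz hx)

end BallCap

section AlignedSequence

variable {Y : Submodule ℝ X} {f : ℕ → X →L[ℝ] ℝ} {a : ℕ → ℝ}

lemma norm_add_sub_le_norm_add_smul {y x : X} {δ w : ℝ} (hx : x ∈ almostAligned Y y δ)
    (hw : w ∈ Icc (0 : ℝ) 1) : ‖y‖ + w - δ ≤ ‖y + w • x‖ := by
  have hnorm := norm_add_le (y + w • x) ((1 - w) • x)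
  rw [norm_smul_of_nonneg (sub_nonneg.mpr hw.2),
    show y + w • x + (1 - w) • x = y + x by module] at hnorm
  have hmul : (1 - w) * ‖x‖ ≤ 1 - w :=
    mul_le_of_le_one_right (sub_nonneg.mpr hw.2) (mem_ball_zero_iff.mp hx.1.2).le
  linarith [hx.2]

lemma IsDaugavetSubspace.exists_seq_forall_mem_almostAligned (hY : IsDaugavetSubspace Y)
    {K₀ : Set X} (hK₀ : IsCompact K₀) (hK₀Y : K₀ ⊆ Y) {δ : ℕ → ℝ} (hδ : ∀ n, 0 < δ n)
    (hcap : ∀ n, (ballCap Y (f n) (a n)).Nonempty) :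
    ∃ (x : ℕ → X) (K : ℕ → Set X), (∀ n, x n ∈ ballCap Y (f n) (a n)) ∧ K 0 = K₀ ∧
      (∀ n, ∀ y ∈ K n, x n ∈ almostAligned Y y (δ n)) ∧
      ∀ n, ∀ y ∈ K n, ∀ w ∈ Icc (0 : ℝ) 1, y + w • x n ∈ K (n + 1) := by
  let S := {K : Set X // IsCompact K ∧ K ⊆ Y}
  choose p hp halign using fun (n : ℕ) (K : S) =>
    hY.exists_mem_ballCap_forall_mem_almostAligned K.2.1 K.2.2 (hδ n) (hcap n)
  let next (n : ℕ) (K : S) : S :=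
    ⟨(fun z : X × ℝ => z.1 + z.2 • p n K) '' K.1 ×ˢ Icc (0 : ℝ) 1,
      (K.2.1.prod isCompact_Icc).image (by fun_prop), by
        rintro _ ⟨⟨y, w⟩, ⟨hy, -⟩, rfl⟩
        exact Y.add_mem (K.2.2 hy) (Y.smul_mem w (hp n K).1.1)⟩
  let K (n : ℕ) : S := Nat.rec ⟨K₀, hK₀, hK₀Y⟩ next n
  exact ⟨fun n => p n (K n), fun n => (K n).1, fun n => hp n (K n), rfl,
    fun n => halign n (K n), fun n y hy w hw => ⟨(y, w), ⟨hy, hw⟩, rfl⟩⟩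

lemma norm_add_sum_sub_sum_le {x : ℕ → X} {K : ℕ → Set X} {δ w : ℕ → ℝ}
    (halign : ∀ n, ∀ y ∈ K n, x n ∈ almostAligned Y y (δ n))
    (hK : ∀ n, ∀ y ∈ K n, ∀ w ∈ Icc (0 : ℝ) 1, y + w • x n ∈ K (n + 1))
    (hw : ∀ k, w k ∈ Icc (0 : ℝ) 1) {y : X} (hy : y ∈ K 0) (n : ℕ) :
    y + ∑ k ∈ Finset.range n, w k • x k ∈ K n ∧
      ‖y‖ + ∑ k ∈ Finset.range n, w k - ∑ k ∈ Finset.range n, δ k ≤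
        ‖y + ∑ k ∈ Finset.range n, w k • x k‖ := by
  induction n with
  | zero => simpa using hy
  | succ n ih =>
    simp only [Finset.sum_range_succ, ← add_assoc]
    refine ⟨hK n _ ih.1 _ (hw n), ?_⟩
    linarith [ih.2, norm_add_sub_le_norm_add_smul (halign n _ ih.1) (hw n)]

lemma IsDaugavetSubspace.exists_seq_forall_norm_add_half_le (hY : IsDaugavetSubspace Y)
    {K : Set X} (hK : IsCompact K) (hKY : K ⊆ Y) (hcap : ∀ n, (ballCap Y (f n) (a n)).Nonempty) :
    ∃ x : ℕ → X, (∀ n, x n ∈ ballCap Y (f n) (a n)) ∧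
      ∀ y ∈ K, ∀ z ∈ convexHull ℝ (range x), ‖y‖ + 1 / 2 ≤ ‖y + z‖ := by
  obtain ⟨x, L, hx, rfl, halign, hL⟩ := hY.exists_seq_forall_mem_almostAligned hK hKY
    (δ := fun n => 1 / 4 * (1 / 2) ^ n) (fun n => by positivity) hcap
  refine ⟨x, hx, fun y hy z hz => ?_⟩
  obtain ⟨n, w, hw, hw_sum, rfl⟩ := exists_weights_of_mem_convexHull_range hz
  have hnorm := (norm_add_sum_sub_sum_le halign hL hw hy n).2
  rw [hw_sum, ← Finset.mul_sum] at hnorm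
  linarith [sum_geometric_two_le n]

end AlignedSequence

section NotSCD

lemma IsSlice.exists_halfSpace_of_closure {s S : Set X} (hS : IsSlice (closure s) S) :
    ∃ (f : X →L[ℝ] ℝ) (a : ℝ), (∃ c ∈ s, a < f c) ∧ ∀ c ∈ s, a < f c → c ∈ S := by
  obtain ⟨⟨c, hcS⟩, f, -, ε, -, rfl⟩ := hS
  obtain ⟨c', hc', hc's⟩ := mem_closure_iff.mp hcS.1 _
    (isOpen_lt continuous_const f.continuous) hcS.2
  exact ⟨f, _, ⟨c', hc's, hc'⟩, fun v hv hav => ⟨subset_closure hv, hav⟩⟩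

theorem IsDaugavetSubspace.not_isSCD_closure_image {Y : Submodule ℝ X}
    (hY : IsDaugavetSubspace Y) {T : X →L[ℝ] X} (hT : IsCompactOperator T)
    (hTY : closure (T '' ball 0 1) ⊆ Y) :
    ¬ IsSCD (closure ((ContinuousLinearMap.id ℝ X - T) '' openUnitBall Y)) := by
  rintro ⟨V, hV, hdet⟩
  set Q := ContinuousLinearMap.id ℝ X - T
  choose f a hfa hV using fun n => (hV n).exists_halfSpace_of_closure
  have hcap (n : ℕ) : (ballCap Y ((f n).comp Q) (a n)).Nonempty := by
    obtain ⟨_, ⟨u, hu, rfl⟩, hau⟩ := hfa n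
    exact ⟨u, hu, hau⟩
  obtain ⟨x, hx, hnorm⟩ := hY.exists_seq_forall_norm_add_half_le
    (hT.isCompact_closure_image_ball 1) hTY hcap
  have hzero : (0 : X) ∈ closure (convexHull ℝ (range (Q ∘ x))) :=
    hdet _ (fun n => ⟨Q (x n), mem_range_self n,
      hV n _ (mem_image_of_mem Q (hx n).1) (hx n).2⟩)
      (subset_closure ⟨0, zero_mem_openUnitBall Y, map_zero Q⟩)
  obtain ⟨_, hv, hv_lt⟩ := Metric.mem_closure_iff.mp hzero (1 / 2) one_half_pos
  have himage : convexHull ℝ (range (Q ∘ x)) = Q '' convexHull ℝ (range x) := by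
    rw [range_comp]
    exact (Q.toLinearMap.image_convexHull _).symm
  obtain ⟨z, hz, rfl⟩ := himage ▸ hv
  have hz_ball : z ∈ ball (0 : X) 1 :=
    convexHull_min (range_subset_iff.mpr fun n => (hx n).1.2) (convex_ball 0 1) hz
  have hTz : T (-z) ∈ closure (T '' ball 0 1) :=
    subset_closure (mem_image_of_mem T (by simpa using hz_ball))
  have hQz : Q z = T (-z) + z := by
    simp only [Q, sub_apply, ContinuousLinearMap.id_apply, map_neg]
    abel
  have := hnorm _ hTz z hz
  rw [dist_zero_left, hQz] at hv_lt
  linarith [norm_nonneg (T (-z))]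

lemma DaugavetProperty.exists_isBiorthogonalPair (h : DaugavetProperty X) :
    ∃ (e₁ e₂ : X) (h₁ h₂ : X →L[ℝ] ℝ), IsBiorthogonalPair e₁ e₂ h₁ h₂ := by
  have := h.nontrivial
  obtain ⟨e₁, he₁⟩ := exists_ne (0 : X)
  obtain ⟨h₁, h₁₁⟩ := SeparatingDual.exists_eq_one (R := ℝ) he₁
  obtain ⟨x, hx⟩ := h.exists_add_smul_ne_zero h₁ (-e₁)
  obtain ⟨g, hg⟩ := SeparatingDual.exists_eq_one (R := ℝ) hx
  have h₁₂ : h₁ (x + h₁ x • -e₁) = 0 := by simp [h₁₁]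
  exact ⟨e₁, x + h₁ x • -e₁, h₁, g - g e₁ • h₁,
    { fst_fst := h₁₁
      fst_snd := h₁₂
      snd_fst := by simp [h₁₁]
      snd_snd := by rw [sub_apply, smul_apply, h₁₂, hg, smul_zero, sub_zero] }⟩

variable {e₁ e₂ : X} {h₁ h₂ : X →L[ℝ] ℝ}

lemma isCompactOperator_coordProj : IsCompactOperator (coordProj e₁ e₂ h₁ h₂) :=
  have hrank (f : X →L[ℝ] ℝ) (e : X) : IsCompactOperator (f.smulRight e) :=
    (isCompactOperator_of_locallyCompactSpace_dom f).clm_comp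
      (ContinuousLinearMap.toSpanSingleton ℝ e)
  (hrank h₁ e₁).add (hrank h₂ e₂)

lemma closure_coordProj_image_subset_span (s : Set X) :
    closure (coordProj e₁ e₂ h₁ h₂ '' s) ⊆ Submodule.span ℝ {e₁, e₂} := by
  have : FiniteDimensional ℝ (Submodule.span ℝ {e₁, e₂}) :=
    FiniteDimensional.span_of_finite ℝ (Set.toFinite _)
  refine closure_minimal ?_ (Submodule.closed_of_finiteDimensional _)
  rintro _ ⟨x, -, rfl⟩
  exact Submodule.mem_span_pair.mpr ⟨h₁ x, h₂ x, rfl⟩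

theorem DaugavetProperty.exists_not_isSCD (h : DaugavetProperty X)
    (hpair : IsBiorthogonalPair e₁ e₂ h₁ h₂) :
    ∃ K : Set X, K.Nonempty ∧ IsSeparable K ∧ IsBounded K ∧ Convex ℝ K ∧ IsClosed K ∧
      (∀ x ∈ K, h₁ x = 0) ∧ (∀ x ∈ K, h₂ x = 0) ∧ ¬ IsSCD K := by
  obtain ⟨Y, hspan, hsep, hY⟩ := h.exists_separable_isDaugavetSubspace
    (Z := .span ℝ {e₁, e₂}) (Set.toFinite {e₁, e₂}).isSeparable.span
  set Q := ContinuousLinearMap.id ℝ X - coordProj e₁ e₂ h₁ h₂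
  have hker {g : X →L[ℝ] ℝ} (hg : ∀ x, g (coordProj e₁ e₂ h₁ h₂ x) = g x) :
      ∀ x ∈ closure (Q '' openUnitBall Y), g x = 0 := by
    refine closure_minimal (t := {x | g x = 0}) (forall_mem_image.mpr fun x _ => ?_)
      (isClosed_eq g.continuous continuous_const)
    simp [Q, hg]
  refine ⟨closure (Q '' openUnitBall Y), ⟨Q 0, ?_⟩, ?_, ?_, ?_, isClosed_closure,
    hker hpair.fst_coordProj, hker hpair.snd_coordProj, ?_⟩
  · exact subset_closure (mem_image_of_mem Q (zero_mem_openUnitBall Y))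
  · exact ((hsep.mono inter_subset_left).image Q.continuous).closure
  · exact ((isBounded_openUnitBall Y).image Q).closure
  · exact ((convex_openUnitBall Y).linear_image Q.toLinearMap).closure
  · exact hY.not_isSCD_closure_image isCompactOperator_coordProj
      ((closure_coordProj_image_subset_span _).trans hspan)

end NotSCD

theorem exists_scd_sets_inter_not_scd_general (h : DaugavetProperty X) :
    ∃ A D : Set X,
      Convex ℝ A ∧ IsClosed A ∧ IsBounded A ∧ IsSCD A ∧
      Convex ℝ D ∧ IsClosed D ∧ IsBounded D ∧ IsSCD D ∧
      (A ∩ D).Nonempty ∧ ¬ IsSCD (A ∩ D) := by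
  obtain ⟨e₁, e₂, h₁, h₂, hpair⟩ := h.exists_isBiorthogonalPair
  obtain ⟨K, hne, hsep, hbdd, hconv, hclosed, hK₁, hK₂, hK⟩ := h.exists_not_isSCD hpair
  obtain ⟨A, D, hAconv, hAclosed, hAbdd, hA, hDconv, hDclosed, hDbdd, hD, rfl⟩ :=
    hpair.exists_isSCD_inter_eq hne hsep hbdd hconv hclosed hK₁ hK₂
  exact ⟨A, D, hAconv, hAclosed, hAbdd, hA, hDconv, hDclosed, hDbdd, hD, hne, hK⟩

theorem exists_scd_sets_inter_not_scd
    {X : Type*} [NormedAddCommGroup X] [NormedSpace ℝ X] [CompleteSpace X]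
    (h : DaugavetProperty X) :
    ∃ A D : Set X,
      Convex ℝ A ∧ IsClosed A ∧ IsBounded A ∧ IsSCD A ∧
      Convex ℝ D ∧ IsClosed D ∧ IsBounded D ∧ IsSCD D ∧
      (A ∩ D).Nonempty ∧ ¬ IsSCD (A ∩ D) :=
  exists_scd_sets_inter_not_scd_general h
end
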